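/- Let (Q, Σ) be a DFA with n = |Q| ≥ 4. If there exists a word w over Σ such that |Qw| = 1, then there exists a word w over Σ with |w| ≤ (n³ − n)/6 − 1 and |Qw| = 1. -/

import Mathlib

/-- The image of a finite set of states `R` under a word (list of letters),
where each letter `s` acts on states via `act s`. -/
def wordImage {Q A : Type*} [DecidableEq Q] (act : A → Q → Q) (R : Finset Q) :
    List A → Finset Q
  | [] => R
  | s :: w => wordImage act (R.image (act s)) w

namespace Synch

/-- action of a word on a state -/
def ev {Q A : Type*} (act : A → Q → Q) (w : List A) (x : Q) : Q :=
  w.foldl (fun t s => act s t) x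

theorem ev_append {Q A : Type*} (act : A → Q → Q) (u v : List A) (x : Q) :
    ev act (u ++ v) x = ev act v (ev act u x) := by
  simp [ev, List.foldl_append]

theorem wordImage_eq {Q A : Type*} [DecidableEq Q] (act : A → Q → Q) (w : List A) :
    ∀ R : Finset Q, wordImage act R w = R.image (ev act w) := by
  induction w with
  | nil => intro R; ext x; simp [wordImage, ev]
  | cons s w ih =>
    intro R
    rw [wordImage, ih, Finset.image_image]
    rfl

/-- state `x` is missed by a word of length at most `k` -/
def One {Q A : Type*} (act : A → Q → Q) (k : ℕ) (x : Q) : Prop :=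
  ∃ w : List A, w.length ≤ k ∧ ∀ t, ev act w t ≠ x

/-- distinct states `x, y` are missed by one word of length at most `k` -/
def Two {Q A : Type*} (act : A → Q → Q) (k : ℕ) (x y : Q) : Prop :=
  x ≠ y ∧ ∃ w : List A, w.length ≤ k ∧ ∀ t, ev act w t ≠ x ∧ ev act w t ≠ y

/-- letter collapsing only `p, q` and missing `p` -/
def Dft {Q : Type*} (p q : Q) (f : Q → Q) : Prop :=
  (∀ t, f t ≠ p) ∧ ∀ s t, f s = f t → s = t ∨ (s = p ∧ t = q) ∨ (s = q ∧ t = p)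

section rules
variable {Q A : Type*} {act : A → Q → Q} {k : ℕ} {x y p q : Q} {g : A}

theorem ev_snoc (w : List A) (t : Q) : ev act (w ++ [g]) t = act g (ev act w t) := by
  simp [ev, List.foldl_append]

theorem One.perm (h : One act k x) (hg : Function.Injective (act g)) :
    One act (k + 1) (act g x) := by
  obtain ⟨w, hw, h⟩ := h
  refine ⟨w ++ [g], by simpa using hw, fun t => ?_⟩
  rw [ev_snoc]
  exact fun e => h t (hg e)

theorem Two.symm (h : Two act k x y) : Two act k y x := by
  obtain ⟨h0, w, hw, h⟩ := h
  exact ⟨h0.symm, w, hw, fun t => (h t).symm⟩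

theorem Two.mono (h : Two act k x y) {l : ℕ} (hl : k ≤ l) : Two act l x y := by
  obtain ⟨h0, w, hw, h⟩ := h
  exact ⟨h0, w, hw.trans hl, h⟩

theorem Two.perm (h : Two act k x y) (hg : Function.Injective (act g)) :
    Two act (k + 1) (act g x) (act g y) := by
  obtain ⟨h0, w, hw, h⟩ := h
  refine ⟨fun e => h0 (hg e), w ++ [g], by simpa using hw, fun t => ?_⟩
  rw [ev_snoc]
  exact ⟨fun e => (h t).1 (hg e), fun e => (h t).2 (hg e)⟩

theorem One.dft (h : One act k x) (hg : Dft p q (act g)) (hp : x ≠ p) (hq : x ≠ q) :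
    Two act (k + 1) p (act g x) := by
  obtain ⟨w, hw, h⟩ := h
  refine ⟨(hg.1 x).symm, w ++ [g], by simpa using hw, fun t => ?_⟩
  rw [ev_snoc]
  refine ⟨hg.1 _, fun e => ?_⟩
  rcases hg.2 _ _ e with h1 | h1 | h1
  · exact h t h1
  · exact hq h1.2
  · exact hp h1.2

theorem Two.collapse (h : Two act k p q) (hg : Dft p q (act g)) :
    Two act (k + 1) p (act g p) := by
  obtain ⟨h0, w, hw, h⟩ := h
  refine ⟨(hg.1 p).symm, w ++ [g], by simpa using hw, fun t => ?_⟩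
  rw [ev_snoc]
  refine ⟨hg.1 _, fun e => ?_⟩
  rcases hg.2 _ _ e with h1 | h1 | h1
  · exact (h t).1 h1
  · exact (h t).1 h1.1
  · exact (h t).2 h1.1

end rules

section key
variable {Q A : Type*} {act : A → Q → Q} {p q r : Q}

theorem finish (hpq : p ≠ q) (hrp : r ≠ p) (hrq : r ≠ q)
    (hlet : ∀ g, Function.Injective (act g) ∨ Dft p q (act g))
    (hDq : ∀ g, Dft p q (act g) → act g p = act g q)
    (hp : ∀ g, Function.Injective (act g) → act g p = p ∨ act g p = q)
    (hfour : ∃ z, z ≠ p ∧ z ≠ q ∧ z ≠ r)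
    (hsync : ∀ P : Q → Prop, (∀ g z, P z ↔ P (act g z)) → ∀ s t, P s → P t)
    (E1 : ∀ z, Two act 6 p z → z = p ∨ z = q ∨ z = r)
    (E2 : ∀ z, Two act 7 q z → z = p ∨ z = q ∨ z = r)
    (hr : One act 3 r)
    (h5 : Two act 5 p q) (h6 : Two act 6 p r)
    (hh : Two act 5 p r ∨ (Two act 4 p q ∧ Two act 5 q r)) : False := by
  obtain ⟨z, hz1, hz2, hz3⟩ := hfour
  have := hsync (fun z => z = p ∨ z = q ∨ z = r) ?_ p z (Or.inl rfl)
  · tauto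
  intro g z
  have main : ∀ z, (z = p ∨ z = q ∨ z = r) → (act g z = p ∨ act g z = q ∨ act g z = r) := ?_
  · refine ⟨main z, ?_⟩
    have m1 := main p (by simp)
    have m2 := main q (by simp)
    have m3 := main r (by simp)
    intro hz
    rcases hlet g with hg | hg
    · have i1 := hg.ne hpq
      have i2 := hg.ne hrp
      have i3 := hg.ne hrq
      have i4 := @hg z p
      have i5 := @hg z q
      have i6 := @hg z r
      grind
    · have i1 := hg.1
      have i2 := hg.2 r p
      have i4 := hg.2 z p
      have i5 := hg.2 z q
      have i6 := hg.2 z r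
      grind
  rcases hlet g with hg | hg
  · have m1 := hp g hg
    have m2 : act g q = p ∨ act g q = q ∨ act g q = r := by
      have := h5.perm hg
      rcases m1 with m1 | m1 <;> rw [m1] at this
      · exact E1 _ this
      · exact E2 _ (this.mono (by norm_num))
    have m3 : act g r = p ∨ act g r = q ∨ act g r = r := by
      rcases m1 with m1 | m1
      · rcases hh with hh | ⟨ha, hb⟩
        · have := hh.perm hg
          rw [m1] at this
          exact E1 _ this
        · rcases m2 with m2 | m2 | m2
          · exact absurd (hg (m1.trans m2.symm)) hpq
          · have := hb.perm hg
            rw [m2] at this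
            exact E2 _ (this.mono (by norm_num))
          · have := ha.perm hg
            rw [m1, m2] at this
            have := this.perm hg
            rw [m1] at this
            exact E1 _ this
      · have := h6.perm hg
        rw [m1] at this
        exact E2 _ this
    rintro z (rfl | rfl | rfl) <;> tauto
  · have m1 := E1 _ (h5.collapse hg)
    have m3 := E1 _ ((hr.dft hg hrp hrq).mono (by norm_num))
    have m2 := hDq g hg
    rintro z (rfl | rfl | rfl)
    · exact m1
    · rwa [← m2]
    · exact m3

theorem key (hpq : p ≠ q) (hrp : r ≠ p) (hrq : r ≠ q)
    (hlet : ∀ g, Function.Injective (act g) ∨ Dft p q (act g))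
    (hDq : ∀ g, Dft p q (act g) → act g p = act g q)
    (hp : ∀ g, Function.Injective (act g) → act g p = p ∨ act g p = q)
    (hfour : ∃ z, z ≠ p ∧ z ≠ q ∧ z ≠ r)
    (hsync : ∀ P : Q → Prop, (∀ g z, P z ↔ P (act g z)) → ∀ s t, P s → P t)
    (hgood : ∀ x y, Two act 8 x y → x ≠ p → x ≠ q → (y = p ∨ y = q))
    (a b c : A) (ha : Dft p q (act a)) (hb : Function.Injective (act b))
    (hc : Function.Injective (act c)) (hbp : act b p = q) (hcq : act c q = r)
    (hnd : b = c ∨ ∀ g, Function.Injective (act g) → act g p = q → act g q = p ∨ act g q = q)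
    (h1 : One act 1 p) : False := by
  have h2 := h1.perm hb
  rw [hbp] at h2
  have h3 := h2.perm hc
  rw [hcq] at h3
  norm_num at h3
  have h4 := h3.dft ha hrp hrq
  norm_num at h4
  obtain ⟨y, hy⟩ : ∃ y, act a r = y := ⟨_, rfl⟩
  rw [hy] at h4
  have hyp : y ≠ p := hy ▸ ha.1 r
  have good : ∀ k x y, Two act k x y → k ≤ 8 → x ≠ p → x ≠ q → (y = p ∨ y = q) :=
    fun k x y h hk => hgood x y (h.mono hk)
  -- the two basic moves
  have mq : ∀ k z, Two act k q z → k ≤ 7 → act c z = p ∨ act c z = q := by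
    intro k z h hk
    have := h.perm hc
    rw [hcq] at this
    exact good _ _ _ this (by omega) hrp hrq
  have mp : ∀ k z, Two act k p z → k ≤ 6 → act c (act b z) = p ∨ act c (act b z) = q := by
    intro k z h hk
    have := h.perm hb
    rw [hbp] at this
    exact mq _ _ this (by omega)
  rcases hnd with hnd | hnd
  · subst hnd
    have m1 := mp _ _ h4 (by norm_num)
    have h6 := (h4.perm hb).perm hb
    rw [hbp, hcq] at h6
    norm_num at h6
    by_cases hs : act b r = p
    · -- 3-cycle
      have hy2 : y = q ∨ y = r := by
        rcases m1 with m | m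
        · left; apply hb; apply hb; rw [m, hcq, hs]
        · right; apply hb; apply hb; rw [m, hs, hbp]
      have out : ∀ z, act b z = p ∨ act b z = q ∨ act b z = r → z = p ∨ z = q ∨ z = r := by
        intro z hz
        have i4 := @hb z p
        have i5 := @hb z q
        have i6 := @hb z r
        grind
      have E1 : ∀ z, Two act 6 p z → z = p ∨ z = q ∨ z = r := by
        intro z hz
        have := mp _ _ hz le_rfl
        apply out; apply out; tauto
      have E2 : ∀ z, Two act 7 q z → z = p ∨ z = q ∨ z = r := by
        intro z hz
        have := mq _ _ hz le_rfl
        apply out; tauto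
      have h5 := h4.perm hb
      have h6 := h5.perm hb
      rcases hy2 with rfl | rfl
      · rw [hbp, hcq] at h5
        rw [hbp, hcq, hs] at h6
        exact finish hpq hrp hrq hlet hDq hp hfour hsync E1 E2 h3 (h4.mono (by norm_num))
          h6.symm (Or.inr ⟨h4, h5⟩)
      · rw [hs, hbp] at h5
        exact finish hpq hrp hrq hlet hDq hp hfour hsync E1 E2 h3 h5.symm
          (h4.mono (by norm_num)) (Or.inl (h4.mono (by norm_num)))
    · obtain ⟨s, hs'⟩ : ∃ s, act b r = s := ⟨_, rfl⟩
      rw [hs'] at hs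
      have hsq : s ≠ q := by
        rintro rfl; exact hrp (hb (hs'.trans hbp.symm))
      have hsr : s ≠ r := by
        rintro rfl; exact hrq (hb (hs'.trans hcq.symm))
      have h7 := h6.perm hb
      rw [hs'] at h7
      have m2 := good _ _ _ h7 (by norm_num) hs hsq
      have m1' : act b (act b y) = p := by
        rcases m1 with m | m
        · exact m
        · rw [m, hcq] at m2; tauto
      rw [m1', hbp] at h7
      have h8 := h7.symm.perm hb
      rw [hcq] at h8
      have m3 := good _ _ _ h8 (by norm_num) hrp hrq
      have hsp : act b s = p := by
        rcases m3 with m | m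
        · exact m
        · exact absurd (hb (m.trans hbp.symm)) hs
      have hyr : y = r := by
        apply hb; apply hb; rw [m1', hs', hsp]
      subst hyr
      have g4 := h3.perm hb
      rw [hs'] at g4
      have g5 := g4.dft ha hs hsq
      norm_num at g5
      rcases mp _ _ g5 (by norm_num) with m | m
      · have : act a s = y := by apply hb; apply hb; rw [m, hs', hsp]
        have := ha.2 s y (this.trans hy.symm)
        tauto
      · have has : act a s = s := by apply hb; apply hb; rw [m, hsp, hbp]
        rw [has] at g5
        have g8 := ((g5.perm hb).perm hb).perm hb
        rw [hbp, hcq, hs', hsp, hbp, hcq] at g8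
        have := good _ _ _ g8 (by norm_num) hs hsq
        tauto
  · have hcp : act c p = p := by
      rcases hp c hc with h | h
      · exact h
      · have := hnd c hc h
        rw [hcq] at this; tauto
    have hbq : act b q = p := by
      rcases hnd b hb hbp with h | h
      · exact h
      · exact absurd (hb (hbp.trans h.symm)) hpq
    have cne : ∀ z, act c z = p → z = p := fun z h => hc (h.trans hcp.symm)
    have bne : ∀ z, act b z = p → z = q := fun z h => hb (h.trans hbq.symm)
    have bneq : ∀ z, act b z = q → z = p := fun z h => hb (h.trans hbp.symm)
    have mp' : ∀ k z, Two act k p z → k ≤ 6 → z = q ∨ act c (act b z) = q := by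
      intro k z h hk
      rcases mp k z h hk with m | m
      · exact Or.inl (bne _ (cne _ m))
      · exact Or.inr m
    have res : act c r = q ∧ act b r = r ∧ (y = q ∨ y = r) := by
      by_cases hyq : y = q
      · subst hyq
        have h5 := h4.perm hc
        rw [hcp, hcq] at h5
        have m1 := (mp' _ _ h5 (by norm_num)).resolve_left hrq
        have h6 := h5.perm hc
        rw [hcp] at h6
        have hcr : act c r = y := by
          rcases mp' _ _ h6 (by norm_num) with m | m
          · exact m
          · have : act c r = r := hb (hc (m.trans m1.symm))
            exact absurd (hc (this.trans hcq.symm)) hrq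
        exact ⟨hcr, hc (m1.trans hcr.symm), Or.inl rfl⟩
      · have m1 := (mp' _ _ h4 (by norm_num)).resolve_left hyq
        have h6 := (h4.perm hb).perm hc
        rw [hbp, hcq, m1] at h6
        norm_num at h6
        have m2 := mq _ _ h6.symm (by norm_num)
        have hcr : act c r = q := by
          rcases m2 with m | m
          · exact absurd (cne _ m) hrp
          · exact m
        have hby : act b y = r := hc (m1.trans hcr.symm)
        by_cases hyr : y = r
        · exact ⟨hcr, by rw [← hyr, hby, hyr], Or.inr hyr⟩
        exfalso
        have hbr : act b r ≠ r := fun h => hyr (hb (hby.trans h.symm))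
        have hbrp : act b r ≠ p := fun h => hrq (bne _ h)
        have hbrq : act b r ≠ q := fun h => hrp (bneq _ h)
        have g5 := (h3.perm hb).dft ha hbrp hbrq
        norm_num at g5
        rcases mp' _ _ g5 (by norm_num) with m | m
        · rw [m] at g5
          have g6 := g5.perm hc
          rw [hcp, hcq] at g6
          have := (mp' _ _ g6 (by norm_num)).resolve_left hrq
          exact hbr (hc (this.trans hcr.symm))
        · have : act a (act b r) = act a r := by
            rw [hy]; exact hb (hc (m.trans m1.symm))
          have := ha.2 _ _ this
          tauto
    obtain ⟨hcr, hbr, hyy⟩ := res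
    have outc : ∀ z, act c z = p ∨ act c z = q ∨ act c z = r → z = p ∨ z = q ∨ z = r := by
      intro z hz
      have i4 := @hc z p
      have i5 := @hc z q
      have i6 := @hc z r
      grind
    have outb : ∀ z, act b z = p ∨ act b z = q ∨ act b z = r → z = p ∨ z = q ∨ z = r := by
      intro z hz
      have i4 := @hb z p
      have i5 := @hb z q
      have i6 := @hb z r
      grind
    have E1 : ∀ z, Two act 6 p z → z = p ∨ z = q ∨ z = r := by
      intro z hz
      have := mp _ _ hz le_rfl
      apply outb; apply outc; tauto
    have E2 : ∀ z, Two act 7 q z → z = p ∨ z = q ∨ z = r := by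
      intro z hz
      have := mq _ _ hz le_rfl
      apply outc; tauto
    have h5 := h4.perm hc
    rw [hcp] at h5
    rcases hyy with rfl | rfl
    · rw [hcq] at h5
      exact finish hpq hrp hrq hlet hDq hp hfour hsync E1 E2 h3 (h4.mono (by norm_num))
        (h5.mono (by norm_num)) (Or.inl h5)
    · rw [hcr] at h5
      exact finish hpq hrp hrq hlet hDq hp hfour hsync E1 E2 h3 h5
        (h4.mono (by norm_num)) (Or.inl (h4.mono (by norm_num)))

end key

section frankl

theorem skew {Q : Type*} [Fintype Q] [DecidableEq Q] (l m : ℕ) (T : Fin l → Finset Q)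
    (x y : Fin l → Q) (hT : ∀ i, (T i).card = m) (hx : ∀ i, x i ∉ T i) (hy : ∀ i, y i ∉ T i)
    (hij : ∀ i j, i < j → x j ∈ T i ∨ y j ∈ T i) : l ≤ (m + 2).choose 2 := by
  classical
  let φ : Q → ℚ := fun z => ((Fintype.equivFin Q z : ℕ) : ℚ)
  have hφ : Function.Injective φ := by
    intro a b h
    have h' : ((Fintype.equivFin Q a : ℕ) : ℚ) = ((Fintype.equivFin Q b : ℕ) : ℚ) := h
    exact (Fintype.equivFin Q).injective (Fin.ext (by exact_mod_cast h'))
  let f : Fin l → Polynomial ℚ := fun i => ∏ t ∈ T i, (Polynomial.X - Polynomial.C (φ t))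
  have hev : ∀ i z, (f i).eval (φ z) = 0 ↔ z ∈ T i := by
    intro i z
    simp only [f, Polynomial.eval_prod, Finset.prod_eq_zero_iff]
    constructor
    · rintro ⟨t, ht, h⟩
      have : φ z = φ t := by simpa [sub_eq_zero] using h
      rwa [hφ this]
    · intro h
      exact ⟨z, h, by simp⟩
  have hdeg : ∀ i, (f i).natDegree < m + 1 := by
    intro i
    simp only [f]
    rw [Polynomial.natDegree_prod_of_monic _ _ (fun t _ => Polynomial.monic_X_sub_C _)]
    simp [hT]
  let w : Fin l → (Sym2 (Fin (m + 1)) → ℚ) := fun i s =>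
    Sym2.lift ⟨fun a b : Fin (m + 1) => (f i).coeff (a : ℕ) * (f i).coeff (b : ℕ), fun a b => mul_comm _ _⟩ s
  let Λ : (Sym2 (Fin (m + 1)) → ℚ) →ₗ[ℚ] (Fin l → ℚ) :=
    { toFun := fun g j => ∑ a : Fin (m + 1), ∑ b : Fin (m + 1),
        g s(a, b) * (φ (x j) ^ (a : ℕ) * φ (y j) ^ (b : ℕ))
      map_add' := by
        intro g h; ext j; simp [add_mul, Finset.sum_add_distrib]
      map_smul' := by
        intro c g; ext j; simp [Finset.mul_sum, mul_assoc] }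
  have hΛ : ∀ i j, Λ (w i) j = (f i).eval (φ (x j)) * (f i).eval (φ (y j)) := by
    intro i j
    rw [Polynomial.eval_eq_sum_range' (hdeg i), Polynomial.eval_eq_sum_range' (hdeg i),
      Finset.sum_range, Finset.sum_range, Finset.sum_mul_sum]
    simp only [Λ, w, LinearMap.coe_mk, AddHom.coe_mk, Sym2.lift_mk]
    refine Finset.sum_congr rfl fun a _ => Finset.sum_congr rfl fun b _ => ?_
    ring
  let M : Matrix (Fin l) (Fin l) ℚ := fun i j => Λ (w i) j
  have hdet : M.det ≠ 0 := by
    rw [Matrix.det_of_lowerTriangular M]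
    · rw [Finset.prod_ne_zero_iff]
      intro i _
      simp only [M, hΛ]
      exact mul_ne_zero (fun h => hx i ((hev _ _).1 h)) (fun h => hy i ((hev _ _).1 h))
    · intro i j h
      simp only [M, hΛ]
      have h' : i < j := h
      rcases hij i j h' with h1 | h1
      · rw [(hev _ _).2 h1, zero_mul]
      · rw [(hev _ _).2 h1, mul_zero]
  have hli : LinearIndependent ℚ (Λ ∘ w) := by
    have := Matrix.linearIndependent_rows_of_det_ne_zero hdet
    exact this
  have hli' : LinearIndependent ℚ w := LinearIndependent.of_comp Λ hli
  have := hli'.fintype_card_le_finrank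
  simpa [Sym2.card] using this

theorem frankl {Q A : Type*} [Fintype Q] [DecidableEq Q] (act : A → Q → Q) (S : Finset Q)
    (h : ∃ u : List A, (S.image (ev act u)).card < S.card) :
    ∃ u : List A, u.length ≤ (Fintype.card Q - S.card + 2).choose 2 ∧
      (S.image (ev act u)).card < S.card := by
  classical
  have hex : ∃ l, ∃ u : List A, u.length = l ∧ (S.image (ev act u)).card < S.card := by
    obtain ⟨u, hu⟩ := h
    exact ⟨_, u, rfl, hu⟩
  obtain ⟨u, hul, hu⟩ := Nat.find_spec hex
  have hmin : ∀ v : List A, v.length < u.length → S.card ≤ (S.image (ev act v)).card := by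
    intro v hv
    rw [hul] at hv
    have := Nat.find_min hex hv
    push Not at this
    exact this v rfl
  refine ⟨u, ?_, hu⟩
  obtain ⟨x, hx, y, hy, hxy, hc⟩ := Finset.exists_ne_map_eq_of_card_lt_of_maps_to hu
    (fun z hz => Finset.mem_image_of_mem (ev act u) hz)
  have hinj : ∀ v : List A, v.length < u.length → Set.InjOn (ev act v) S := by
    intro v hv
    exact Finset.card_image_iff.1 (le_antisymm Finset.card_image_le (hmin v hv))
  refine skew u.length _ (fun i => (S.image (ev act (u.take i)))ᶜ)
    (fun i => ev act (u.take i) x) (fun i => ev act (u.take i) y) ?_ ?_ ?_ ?_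
  · intro i
    rw [Finset.card_compl, Finset.card_image_of_injOn (hinj _ (by simp))]
  · intro i
    simp only [Finset.mem_compl, not_not]
    exact Finset.mem_image_of_mem _ hx
  · intro i
    simp only [Finset.mem_compl, not_not]
    exact Finset.mem_image_of_mem _ hy
  · intro i j hlt
    by_contra hcon
    push Not at hcon
    simp only [Finset.mem_compl, not_not] at hcon
    obtain ⟨h1, h2⟩ := hcon
    obtain ⟨x', hx', ex⟩ := Finset.mem_image.1 h1
    obtain ⟨y', hy', ey⟩ := Finset.mem_image.1 h2
    have hi : (i : ℕ) < j := hlt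
    have hj := j.2
    have hlen : (u.take i ++ u.drop j).length < u.length := by
      simp; omega
    have e : ev act (u.take i ++ u.drop j) x' = ev act (u.take i ++ u.drop j) y' := by
      rw [ev_append, ev_append, ex, ey, ← ev_append, ← ev_append, List.take_append_drop]
      exact hc
    have e2 : x' = y' := hinj _ hlen hx' hy' e
    subst e2
    exact hxy (hinj (u.take j) (by simp) hx hy (ex.symm.trans ey))

end frankl

section start
variable {Q A : Type*} [Fintype Q] [DecidableEq Q]

/-- rank of a word -/
def rk (act : A → Q → Q) (w : List A) : ℕ := (Finset.univ.image (ev act w)).card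

theorem rk_append (act : A → Q → Q) (u v : List A) :
    rk act (u ++ v) = ((Finset.univ.image (ev act u)).image (ev act v)).card := by
  rw [rk, Finset.image_image]
  congr 2
  funext x
  exact ev_append _ _ _ _

theorem rk_step (act : A → Q → Q) (hs : ∃ w, rk act w = 1) (u : List A) (m : ℕ)
    (hm : m + 2 ≤ Fintype.card Q) (hu : rk act u ≤ Fintype.card Q - m) :
    ∃ v, v.length ≤ u.length + (m + 2).choose 2 ∧ rk act v ≤ Fintype.card Q - (m + 1) := by
  by_cases h : rk act u ≤ Fintype.card Q - (m + 1)
  · exact ⟨u, by omega, h⟩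
  have he : rk act u = Fintype.card Q - m := by omega
  obtain ⟨w, hw⟩ := hs
  obtain ⟨v, hv, hv2⟩ := frankl act (Finset.univ.image (ev act u)) ⟨w, by
    have h1 : ((Finset.univ.image (ev act u)).image (ev act w)).card ≤ rk act w :=
      Finset.card_le_card (Finset.image_subset_image (Finset.subset_univ _))
    have h2 : (Finset.univ.image (ev act u)).card = rk act u := rfl
    omega⟩
  have h2 : (Finset.univ.image (ev act u)).card = rk act u := rfl
  rw [h2] at hv hv2
  rw [← rk_append] at hv2
  refine ⟨u ++ v, ?_, by omega⟩
  have : Fintype.card Q - rk act u = m := by omega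
  rw [this] at hv
  simp; omega

theorem rk_le_of_miss (act : A → Q → Q) (w : List A) (s : Finset Q)
    (h : ∀ t, ev act w t ∉ s) : rk act w ≤ Fintype.card Q - s.card := by
  rw [← Finset.card_compl]
  apply Finset.card_le_card
  intro z hz
  obtain ⟨t, -, rfl⟩ := Finset.mem_image.1 hz
  simpa using h t

theorem nine (act : A → Q → Q) (hn : 4 ≤ Fintype.card Q) (hs : ∃ w, rk act w = 1) :
    ∃ w : List A, w.length ≤ 9 ∧ rk act w ≤ Fintype.card Q - 3 := by
  classical
  by_contra hcon
  push Not at hcon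
  have N2 : ∀ w : List A, w.length ≤ 3 → Fintype.card Q - 1 ≤ rk act w := by
    intro w hw
    by_contra hlt
    obtain ⟨v, hv, hv2⟩ := rk_step act hs w 2 (by omega) (by omega)
    have h6 : (2 + 2).choose 2 = 6 := by decide
    have := hcon v (by omega)
    omega
  -- a collapsed pair contains every state missed in two steps
  have pair : ∀ e x y z, act e x = act e y → x ≠ y → One act 2 z → z = x ∨ z = y := by
    intro e x y z hxy hne hz
    by_contra hzz
    push Not at hzz
    obtain ⟨w, hw, hwz⟩ := hz
    have h1 := N2 (w ++ [e]) (by simp; omega)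
    have h2 : rk act (w ++ [e]) ≤ (({z, y} : Finset Q)ᶜ.image (act e)).card := by
      apply Finset.card_le_card
      intro t ht
      obtain ⟨s, -, rfl⟩ := Finset.mem_image.1 ht
      rw [ev_snoc]
      by_cases hy : ev act w s = y
      · rw [hy, ← hxy]
        apply Finset.mem_image_of_mem
        simp [hzz.1.symm, hne]
      · apply Finset.mem_image_of_mem
        simp [hy, hwz s]
    have h3 : (({z, y} : Finset Q)ᶜ.image (act e)).card ≤ Fintype.card Q - 2 := by
      refine Finset.card_image_le.trans ?_
      rw [Finset.card_compl, Finset.card_pair hzz.2]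
    omega
  have one_mono : ∀ k l z, One act k z → k ≤ l → One act l z := by
    rintro k l z ⟨w, hw, h⟩ hkl
    exact ⟨w, hw.trans hkl, h⟩
  -- defective letters
  have miss : ∀ e, ¬ Function.Injective (act e) → ∃ m, (∀ t, act e t ≠ m) ∧
      ∀ z, z ≠ m → ∃ t, act e t = z := by
    intro e he
    have hsur : ¬ Function.Surjective (act e) := fun h => he (Finite.injective_iff_surjective.2 h)
    rw [Function.Surjective] at hsur
    push Not at hsur
    obtain ⟨m, hm⟩ := hsur
    refine ⟨m, hm, fun z hz => ?_⟩
    by_contra hzt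
    push Not at hzt
    have h1 := N2 [e] (by simp)
    have h2 := rk_le_of_miss act [e] {z, m} (by intro t; simp [ev, hm t, hzt t])
    rw [Finset.card_pair hz] at h2
    omega
  -- no closed set of missing states
  have closed : ∀ X : Set Q, (∃ x, x ∈ X) →
      (∀ e x y z, act e x = act e y → x ≠ y → z ∈ X → z = x ∨ z = y) →
      (∀ e m, ¬ Function.Injective (act e) → (∀ t, act e t ≠ m) → m ∈ X) →
      ∃ g x, Function.Injective (act g) ∧ x ∈ X ∧ act g x ∉ X := by
    intro X hX hpair hmiss
    by_contra hno
    push Not at hno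
    have inv : ∀ w : List A, ∃ z ∈ X, ∀ y, y ≠ z → ∃ t, ev act w t = y := by
      intro w
      induction w using List.reverseRecOn with
      | nil =>
        obtain ⟨x, hx⟩ := hX
        exact ⟨x, hx, fun y _ => ⟨y, rfl⟩⟩
      | append_singleton w g ih =>
        obtain ⟨z, hz, hw⟩ := ih
        by_cases hg : Function.Injective (act g)
        · refine ⟨act g z, hno g z hg hz, fun y hy => ?_⟩
          obtain ⟨s, rfl⟩ := (Finite.injective_iff_surjective.1 hg) y
          obtain ⟨t, rfl⟩ := hw s (fun h => hy (by rw [h]))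
          exact ⟨t, ev_snoc _ _⟩
        · obtain ⟨m, hm, hm2⟩ := miss g hg
          refine ⟨m, hmiss g m hg hm, fun y hy => ?_⟩
          obtain ⟨s, rfl⟩ := hm2 y hy
          have hex : ∃ s', s' ≠ z ∧ act g s' = act g s := by
            by_cases hsz : s = z
            · obtain ⟨x, y, hxy, hne⟩ : ∃ x y, act g x = act g y ∧ x ≠ y := by
                rw [Function.Injective] at hg
                push Not at hg
                exact hg
              rcases hpair g x y z hxy hne hz with h | h
              · exact ⟨y, by rw [h]; exact hne.symm, by rw [hsz, h, hxy]⟩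
              · exact ⟨x, by rw [h]; exact hne, by rw [hsz, h, hxy]⟩
            · exact ⟨s, hsz, rfl⟩
          obtain ⟨s', hs', e⟩ := hex
          obtain ⟨t, ht⟩ := hw s' hs'
          exact ⟨t, by rw [ev_snoc, ht, e]⟩
    obtain ⟨w, hw⟩ := hs
    obtain ⟨z, hz, hw2⟩ := inv w
    have : ({z} : Finset Q)ᶜ.card ≤ rk act w := by
      apply Finset.card_le_card
      intro y hy
      obtain ⟨t, rfl⟩ := hw2 y (by simpa using hy)
      exact Finset.mem_image_of_mem _ (Finset.mem_univ _)
    rw [Finset.card_compl, Finset.card_singleton] at this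
    omega
  have mem1 : ∀ e m, (∀ t, act e t ≠ m) → One act 1 m := fun e m h => ⟨[e], by simp, h⟩
  -- existence of a defective letter
  obtain ⟨a, ha⟩ : ∃ a, ¬ Function.Injective (act a) := by
    by_contra hno
    push Not at hno
    obtain ⟨w, hw⟩ := hs
    have hinj : ∀ w : List A, Function.Injective (ev act w) := by
      intro w
      induction w using List.reverseRecOn with
      | nil => exact fun x y h => h
      | append_singleton w g ih =>
        intro x y h
        rw [ev_snoc, ev_snoc] at h
        exact ih (hno g h)
    rw [rk, Finset.card_image_of_injective _ (hinj w), Finset.card_univ] at hw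
    omega
  obtain ⟨p0, hp0, -⟩ := miss a ha
  obtain ⟨b, p, hb, hp1, hbp⟩ := closed {z | One act 1 z} ⟨p0, mem1 a p0 hp0⟩
    (fun e x y z h1 h2 h3 => pair e x y z h1 h2 (one_mono 1 2 z h3 (by norm_num)))
    (fun e m _ hm => mem1 e m hm)
  obtain ⟨q, hq⟩ : ∃ q, act b p = q := ⟨_, rfl⟩
  rw [hq] at hbp
  simp only [Set.mem_ofPred_eq] at hp1 hbp
  have hp2 : One act 2 p := one_mono 1 2 p hp1 (by norm_num)
  have hq2 : One act 2 q := hq ▸ hp1.perm hb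
  have hpq : p ≠ q := by rintro rfl; exact hbp hp1
  have pr : ∀ e x y, act e x = act e y → x = y ∨ (x = p ∧ y = q) ∨ (x = q ∧ y = p) := by
    intro e x y hxy
    by_cases hne : x = y
    · exact Or.inl hne
    have i1 := pair e x y p hxy hne hp2
    have i2 := pair e x y q hxy hne hq2
    grind
  have col : ∀ e, ¬ Function.Injective (act e) → act e p = act e q := by
    intro e he
    rw [Function.Injective] at he
    push Not at he
    obtain ⟨x, y, hxy, hne⟩ := he
    rcases pr e x y hxy with h | ⟨rfl, rfl⟩ | ⟨rfl, rfl⟩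
    · exact absurd h hne
    · exact hxy
    · exact hxy.symm
  have in2 : ∀ z, One act 2 z → z = p ∨ z = q := fun z hz => pair a p q z (col a ha) hpq hz
  have in1 : ∀ z, One act 1 z → z = p := by
    intro z hz
    rcases in2 z (one_mono 1 2 z hz (by norm_num)) with h | h
    · exact h
    · rw [h] at hz; exact absurd hz hbp
  have hdft : ∀ e, ¬ Function.Injective (act e) → Dft p q (act e) := by
    intro e he
    obtain ⟨m, hm, -⟩ := miss e he
    have : m = p := in1 m (mem1 e m hm)
    subst this
    exact ⟨hm, pr e⟩
  have hpp : ∀ g, Function.Injective (act g) → act g p = p ∨ act g p = q :=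
    fun g hg => in2 _ (hp1.perm hg)
  have hcase : ∀ g x, Function.Injective (act g) → x ∈ ({p, q} : Set Q) →
      act g x ∉ ({p, q} : Set Q) → act g q ≠ p ∧ act g q ≠ q := by
    intro g x hg hx hgx
    have := hpp g hg
    simp only [Set.mem_insert_iff, Set.mem_singleton_iff] at hx hgx
    rcases hx with rfl | rfl
    · exact absurd this hgx
    · tauto
  obtain ⟨c0, x0, hc0, hx0, hcx0⟩ := closed {p, q} ⟨p, by simp⟩
    (fun e x y z h1 h2 h3 => by
      have := pr e x y h1
      simp only [Set.mem_insert_iff, Set.mem_singleton_iff] at h3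
      grind)
    (fun e m _ hm => by
      simp only [Set.mem_insert_iff, Set.mem_singleton_iff]
      exact Or.inl (in1 m (mem1 e m hm)))
  have hc0q := hcase c0 x0 hc0 hx0 hcx0
  -- choose `b, c`
  obtain ⟨b', c, hb', hc, hb'p, hcq1, hcq2, hnd⟩ : ∃ b' c, Function.Injective (act b') ∧
      Function.Injective (act c) ∧ act b' p = q ∧ act c q ≠ p ∧ act c q ≠ q ∧
      (b' = c ∨ ∀ g, Function.Injective (act g) → act g p = q → act g q = p ∨ act g q = q) := by
    by_cases hd : ∃ g, Function.Injective (act g) ∧ act g p = q ∧ act g q ≠ p ∧ act g q ≠ q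
    · obtain ⟨g, h1, h2, h3, h4⟩ := hd
      exact ⟨g, g, h1, h1, h2, h3, h4, Or.inl rfl⟩
    · refine ⟨b, c0, hb, hc0, hq, hc0q.1, hc0q.2, Or.inr fun g h1 h2 => ?_⟩
      by_contra h3
      push Not at h3
      exact hd ⟨g, h1, h2, h3⟩
  refine key (act := act) (p := p) (q := q) (r := act c q) hpq hcq1 hcq2
    (fun g => ?_) ?_ hpp ?_ ?_ ?_ a b' c (hdft a ha) hb' hc hb'p rfl hnd hp1
  · by_cases hg : Function.Injective (act g)
    · exact Or.inl hg
    · exact Or.inr (hdft g hg)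
  · intro g hg
    apply col
    intro hi
    obtain ⟨t, ht⟩ := (Finite.injective_iff_surjective.1 hi) p
    exact hg.1 t ht
  · by_contra hno
    push Not at hno
    have : (Finset.univ : Finset Q) ⊆ {p, q, act c q} := by
      intro z _
      have := hno z
      simp only [Finset.mem_insert, Finset.mem_singleton]
      tauto
    have := (Finset.card_le_card this).trans Finset.card_le_three
    rw [Finset.card_univ] at this
    omega
  · intro P hP s t hPs
    obtain ⟨w, hw⟩ := hs
    have hPw : ∀ (w : List A) z, P z ↔ P (ev act w z) := by
      intro w
      induction w using List.reverseRecOn with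
      | nil => intro z; rfl
      | append_singleton w g ih =>
        intro z
        rw [ev_snoc, ← hP, ih]
    obtain ⟨z, hz⟩ := Finset.card_eq_one.1 hw
    have e1 : ∀ s, ev act w s = z := by
      intro s
      have : ev act w s ∈ Finset.univ.image (ev act w) :=
        Finset.mem_image_of_mem _ (Finset.mem_univ _)
      rw [hz] at this
      simpa using this
    rw [hPw w, e1]
    rwa [hPw w, e1] at hPs
  · intro x y hxy hxp hxq
    by_contra hyy
    push Not at hyy
    obtain ⟨hne, w, hw, hm⟩ := hxy
    have hD := hdft a ha
    have h9 := hcon (w ++ [a]) (by simp; omega)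
    have h3 := rk_le_of_miss act (w ++ [a]) {p, act a x, act a y} (by
      intro t
      rw [ev_snoc]
      have j1 := hD.1 (ev act w t)
      have j2 := hD.2 (ev act w t) x
      have j3 := hD.2 (ev act w t) y
      have j4 := hm t
      simp only [Finset.mem_insert, Finset.mem_singleton]
      tauto)
    have j1 := hD.1 x
    have j2 := hD.1 y
    have j3 := hD.2 x y
    have hcard : ({p, act a x, act a y} : Finset Q).card = 3 := by
      rw [Finset.card_eq_three]
      exact ⟨_, _, _, j1.symm, j2.symm, by tauto, rfl⟩
    rw [hcard] at h3
    omega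

end start

end Synch

open Synch in
theorem stmt_4 {Q A : Type*} [Fintype Q] [DecidableEq Q] (act : A → Q → Q)
    (hn : 4 ≤ Fintype.card Q)
    (h : ∃ w : List A, (wordImage act Finset.univ w).card = 1) :
    ∃ w : List A,
      w.length ≤ (Fintype.card Q ^ 3 - Fintype.card Q) / 6 - 1 ∧
      (wordImage act Finset.univ w).card = 1 := by
  have hs : ∃ w, rk act w = 1 := by
    obtain ⟨w, hw⟩ := h
    rw [wordImage_eq] at hw
    exact ⟨w, hw⟩
  have main : ∀ m, 3 ≤ m → m + 1 ≤ Fintype.card Q →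
      ∃ w : List A, w.length + 1 ≤ (m + 2).choose 3 ∧ rk act w ≤ Fintype.card Q - m := by
    intro m hm
    induction m, hm using Nat.le_induction with
    | base =>
      intro _
      obtain ⟨w, hw, hw2⟩ := nine act hn hs
      exact ⟨w, by have : (3 + 2).choose 3 = 10 := by decide
                   omega, hw2⟩
    | succ m hm ih =>
      intro hm2
      obtain ⟨w, hw, hw2⟩ := ih (by omega)
      obtain ⟨v, hv, hv2⟩ := rk_step act hs w m (by omega) hw2
      refine ⟨v, ?_, hv2⟩
      have : (m + 1 + 2).choose 3 = (m + 2).choose 2 + (m + 2).choose 3 :=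
        Nat.choose_succ_succ (m + 2) 2
      omega
  obtain ⟨w, hw, hw2⟩ := main (Fintype.card Q - 1) (by omega) (by omega)
  refine ⟨w, ?_, ?_⟩
  · obtain ⟨n, hn'⟩ : ∃ n, Fintype.card Q = n + 1 := ⟨Fintype.card Q - 1, by omega⟩
    rw [hn'] at hw ⊢
    simp only [Nat.add_sub_cancel] at hw
    have hch : ∀ n : ℕ, 6 * (n + 2).choose 3 + (n + 1) = (n + 1) ^ 3 := by
      intro n
      induction n with
      | zero => decide
      | succ n ih =>
        have e1 : (n + 1 + 2).choose 3 = (n + 2).choose 2 + (n + 2).choose 3 :=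
          Nat.choose_succ_succ (n + 2) 2
        have e2 : (n + 2).choose 2 * 2 = (n + 2) * (n + 1) := by
          have := Nat.add_one_mul_choose_eq (n + 1) 1
          simp at this
          linarith
        rw [e1]
        nlinarith
    have := hch n
    omega
  · rw [wordImage_eq]
    have hpos : 0 < (Finset.univ.image (ev act w)).card := by
      rw [Finset.card_pos]
      have : Nonempty Q := Fintype.card_pos_iff.1 (by omega)
      exact Finset.univ_nonempty.image _
    have : (Finset.univ.image (ev act w)).card ≤ Fintype.card Q - (Fintype.card Q - 1) := hw2
    omega
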